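/- arXiv:0710.1969 — 8 statements merged into one kernel-verified Lean document; each statement's English description precedes it below -/
import Mathlib

section
/- Let ω be the 1-form on ℂ³ given by ω(w)(v) = v₃ − (1/2)w₁v₂ + (1/2)w₂v₁, and let η be the 1-form on ℂ³ given by η(z)(u) = u₁ + z₂u₃. Define φ : ℂ³ → ℂ³ by φ(w₁,w₂,w₃) = (w₃ − (1/2)w₁w₂, w₂, w₁). Then φ is bijective with inverse (z₁,z₂,z₃) ↦ (z₃, z₂, z₁ + (1/2)z₂z₃), and for every w ∈ ℂ³ and every v ∈ ℂ³ one has ω(w)(v) = 0 if and only if η(φ(w))((fderiv φ w)(v)) = 0. (This identifies the superhorizontal Pfaffian system of the twistor fibration F₃(ℂ) → ℂP² with the model system S²₃ = {dz₁ + z₂dz₃}.) -/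
/-- The superhorizontal Pfaffian system of `F₃(ℂ) → ℂP²`, given by the
1-form `ω(w)(v) = v₃ - (1/2)w₁v₂ + (1/2)w₂v₁` on `ℂ³`, is identified with the model
system `S²₃ = {dz₁ + z₂ dz₃}` by `φ(w₁,w₂,w₃) = (w₃ - (1/2)w₁w₂, w₂, w₁)`. -/
theorem stmt1 (ω η : (Fin 3 → ℂ) → ((Fin 3 → ℂ) →L[ℂ] ℂ))
    (hω : ∀ w v, ω w v = v 2 - (1/2) * w 0 * v 1 + (1/2) * w 1 * v 0)
    (hη : ∀ z u, η z u = u 0 + z 1 * u 2)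
    (φ ψ : (Fin 3 → ℂ) → (Fin 3 → ℂ))
    (hφ : ∀ w, φ w = ![w 2 - (1/2) * w 0 * w 1, w 1, w 0])
    (hψ : ∀ z, ψ z = ![z 2, z 1, z 0 + (1/2) * z 1 * z 2]) :
    Function.Bijective φ ∧ Function.LeftInverse ψ φ ∧ Function.RightInverse ψ φ ∧
    ∀ w v : Fin 3 → ℂ, ω w v = 0 ↔ η (φ w) (fderiv ℂ φ w v) = 0 := by
  have hL : Function.LeftInverse ψ φ := by
    intro w
    ext i
    fin_cases i <;> simp [hφ, hψ] <;> ring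
  have hR : Function.RightInverse ψ φ := by
    intro z
    ext i
    fin_cases i <;> simp [hφ, hψ] <;> ring
  refine ⟨⟨hL.injective, hR.surjective⟩, hL, hR, ?_⟩
  intro w v
  have hp : ∀ i : Fin 3, HasFDerivAt (fun x : Fin 3 → ℂ => x i)
      (ContinuousLinearMap.proj (R := ℂ) (φ := fun _ : Fin 3 => ℂ) i) w := fun i =>
    (ContinuousLinearMap.proj (R := ℂ) (φ := fun _ : Fin 3 => ℂ) i).hasFDerivAt
  have hd : DifferentiableAt ℂ φ w := by
    rw [differentiableAt_pi]
    intro i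
    fin_cases i <;> simp [hφ] <;> fun_prop
  have hc : ∀ i, HasFDerivAt (fun x => φ x i)
      ((ContinuousLinearMap.proj (R := ℂ) (φ := fun _ : Fin 3 => ℂ) i).comp (fderiv ℂ φ w)) w :=
    hasFDerivAt_pi'.1 hd.hasFDerivAt
  have e0 : fderiv ℂ φ w v 0 = v 2 - (1/2) * (w 0 * v 1 + w 1 * v 0) := by
    have h1 := (hp 2).sub (((hp 0).mul (hp 1)).const_mul (1/2 : ℂ))
    have h2 := (hc 0).congr_of_eventuallyEq (f₁ := fun x : Fin 3 → ℂ =>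
      x 2 - (1/2) * (x 0 * x 1)) (Filter.Eventually.of_forall fun x => by simp [hφ]; ring)
    have := congrArg (fun L => L v) (h2.unique h1)
    simpa [mul_add] using this
  have e2 : fderiv ℂ φ w v 2 = v 0 := by
    have h2 := (hc 2).congr_of_eventuallyEq (f₁ := fun x : Fin 3 → ℂ => x 0)
      (Filter.Eventually.of_forall fun x => by simp [hφ])
    have := congrArg (fun L => L v) (h2.unique (hp 0))
    simpa using this
  have e1 : φ w 1 = w 1 := by simp [hφ]
  have key : η (φ w) (fderiv ℂ φ w v) = ω w v := by
    rw [hη, hω, e0, e2, e1]; ring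
  rw [key]
end

section
/- On ℂ⁵ with coordinates (x₁,x₂,y₃,y₂,y₁), define the 1-forms ω₁(w)(v) = v_{y₃} − x₂v_{x₁} + x₁v_{x₂}, ω₂(w)(v) = v_{y₂} − (3/2)x₁v_{y₃} + (3/2)y₃v_{x₁} − x₁²v_{x₂} + x₁x₂v_{x₁}, and ω₃(w)(v) = v_{y₁} + (3/2)x₂v_{y₃} − (3/2)y₃v_{x₂} + x₁x₂v_{x₂} − x₂²v_{x₁}. Then the exterior derivatives satisfy dω₂ = 3 ω₁ ∧ dx₁ and dω₃ = −3 ω₁ ∧ dx₂; explicitly, for every w ∈ ℂ⁵ and all constant vectors u, v ∈ ℂ⁵: (fderiv ω₂ w u)(v) − (fderiv ω₂ w v)(u) = 3(ω₁(w)(u)·v_{x₁} − ω₁(w)(v)·u_{x₁}) and (fderiv ω₃ w u)(v) − (fderiv ω₃ w v)(u) = −3(ω₁(w)(u)·v_{x₂} − ω₁(w)(v)·u_{x₂}). -/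
/-- The derivative of a coefficient form, evaluated on a constant vector, is the derivative
of the evaluated function. -/
theorem fderiv_form_apply (ω : (Fin 5 → ℂ) → ((Fin 5 → ℂ) →L[ℂ] ℂ))
    (w u v : Fin 5 → ℂ) (h : DifferentiableAt ℂ ω w) (d : (Fin 5 → ℂ) →L[ℂ] ℂ)
    (hd : HasFDerivAt (fun z => ω z v) d w) :
    (fderiv ℂ ω w u) v = d u := by
  have h1 := h.hasFDerivAt.clm_apply (hasFDerivAt_const v w)
  rw [← h1.unique hd]
  simp

/-- On `ℂ⁵` with coordinates `(x₁,x₂,y₃,y₂,y₁)` (indices `0,1,2,3,4`),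
the exterior derivatives of the G₂ twistor 1-forms satisfy `dω₂ = 3 ω₁ ∧ dx₁` and
`dω₃ = -3 ω₁ ∧ dx₂`, where `dω(w)(u,v) = (fderiv ω w u)(v) - (fderiv ω w v)(u)`. -/
theorem stmt2 (ω₁ ω₂ ω₃ : (Fin 5 → ℂ) → ((Fin 5 → ℂ) →L[ℂ] ℂ))
    (hω₁ : ∀ w v, ω₁ w v = v 2 - w 1 * v 0 + w 0 * v 1)
    (hω₂ : ∀ w v, ω₂ w v = v 3 - (3/2) * w 0 * v 2 + (3/2) * w 2 * v 0
      - w 0 ^ 2 * v 1 + w 0 * w 1 * v 0)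
    (hω₃ : ∀ w v, ω₃ w v = v 4 + (3/2) * w 1 * v 2 - (3/2) * w 2 * v 1
      + w 0 * w 1 * v 1 - w 1 ^ 2 * v 0) :
    ∀ w u v : Fin 5 → ℂ,
      (fderiv ℂ ω₂ w u) v - (fderiv ℂ ω₂ w v) u
        = 3 * (ω₁ w u * v 0 - ω₁ w v * u 0) ∧
      (fderiv ℂ ω₃ w u) v - (fderiv ℂ ω₃ w v) u
        = -3 * (ω₁ w u * v 1 - ω₁ w v * u 1) := by
  have P : ∀ (w : Fin 5 → ℂ) (i : Fin 5), HasFDerivAt (fun z : Fin 5 → ℂ => z i)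
      (ContinuousLinearMap.proj (R := ℂ) (φ := fun _ : Fin 5 => ℂ) i) w :=
    fun w i => hasFDerivAt_apply i w
  let p : Fin 5 → ((Fin 5 → ℂ) →L[ℂ] ℂ) :=
    fun i => ContinuousLinearMap.proj (R := ℂ) (φ := fun _ : Fin 5 => ℂ) i
  have e₂ : ω₂ = fun w => p 3 - ((3/2) * w 0) • p 2 + ((3/2) * w 2) • p 0
      - (w 0 ^ 2) • p 1 + (w 0 * w 1) • p 0 := by
    funext w; ext1 v; simp [hω₂, p]
  have e₃ : ω₃ = fun w => p 4 + ((3/2) * w 1) • p 2 - ((3/2) * w 2) • p 1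
      + (w 0 * w 1) • p 1 - (w 1 ^ 2) • p 0 := by
    funext w; ext1 v; simp [hω₃, p]
  have d₂ : Differentiable ℂ ω₂ := by rw [e₂]; fun_prop
  have d₃ : Differentiable ℂ ω₃ := by rw [e₃]; fun_prop
  have f₂ : ∀ w u v, (fderiv ℂ ω₂ w u) v = -(3/2) * u 0 * v 2 + (3/2) * u 2 * v 0
      - 2 * w 0 * u 0 * v 1 + (u 0 * w 1 + w 0 * u 1) * v 0 := by
    intro w u v
    have H := (((((hasFDerivAt_const (v 3) w).sub (((P w 0).const_mul (3/2)).mul_const (v 2))).add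
      (((P w 2).const_mul (3/2)).mul_const (v 0))).sub (((P w 0).pow 2).mul_const (v 1))).add
      (((P w 0).mul (P w 1)).mul_const (v 0)))
    rw [fderiv_form_apply ω₂ w u v (d₂ w) _ (H.congr_of_eventuallyEq
      (Filter.Eventually.of_forall fun z => by simp [hω₂]))]
    simp
    ring
  have f₃ : ∀ w u v, (fderiv ℂ ω₃ w u) v = (3/2) * u 1 * v 2 - (3/2) * u 2 * v 1
      + (u 0 * w 1 + w 0 * u 1) * v 1 - 2 * w 1 * u 1 * v 0 := by
    intro w u v
    have H := (((((hasFDerivAt_const (v 4) w).add (((P w 1).const_mul (3/2)).mul_const (v 2))).sub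
      (((P w 2).const_mul (3/2)).mul_const (v 1))).add
      (((P w 0).mul (P w 1)).mul_const (v 1))).sub (((P w 1).pow 2).mul_const (v 0)))
    rw [fderiv_form_apply ω₃ w u v (d₃ w) _ (H.congr_of_eventuallyEq
      (Filter.Eventually.of_forall fun z => by simp [hω₃]))]
    simp
    ring
  intro w u v
  rw [f₂, f₂, f₃, f₃, hω₁, hω₁]
  constructor <;> ring
end

section
/- On ℂ⁴ with coordinates (x, t₂, t₁, y), define the 1-forms ω₁(w)(v) = v_{t₁} − (1/2)x·v_{t₂} + (1/2)t₂·v_x and ω₂(w)(v) = v_y + t₁v_{t₂} − t₂v_{t₁} + (1/3)t₂x·v_{t₂} − (1/3)t₂²·v_x. Define ψ : ℂ⁴ → ℂ⁴ by ψ(x,t₂,t₁,y) = (y − t₁t₂ − (1/3)x t₂², 2t₁ + x t₂, t₂, −2x). Then ψ is bijective, and for every w ∈ ℂ⁴ and v ∈ ℂ⁴: (ω₁(w)(v) = 0 and ω₂(w)(v) = 0) if and only if, writing z = ψ(w) and u = (fderiv ψ w)(v), one has u₁ + z₂u₃ = 0 and u₂ + z₄u₃ = 0. (This identifies the superhorizontal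 Pfaffian system of the twistor fibration SO(5)/U(1)×SO(2) → SO(5)/SO(2)×SO(3) with the model system S⁷₄ = {dz₁ + z₂dz₃, dz₂ + z₄dz₃}.) -/
/-- On `ℂ⁴` with coordinates `(x, t₂, t₁, y)` (indices `0,1,2,3`), the
super-horizontal Pfaffian system `{ω₁, ω₂}` of the twistor fibration
`SO(5)/U(1)×SO(2) → SO(5)/SO(2)×SO(3)` is identified with the model system
`S⁷₄ = {dz₁ + z₂dz₃, dz₂ + z₄dz₃}` by
`ψ(x,t₂,t₁,y) = (y - t₁t₂ - (1/3)x t₂², 2t₁ + x t₂, t₂, -2x)`. -/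
theorem stmt6 (ω₁ ω₂ : (Fin 4 → ℂ) → ((Fin 4 → ℂ) →L[ℂ] ℂ))
    (hω₁ : ∀ w v, ω₁ w v = v 2 - (1/2) * w 0 * v 1 + (1/2) * w 1 * v 0)
    (hω₂ : ∀ w v, ω₂ w v = v 3 + w 2 * v 1 - w 1 * v 2
      + (1/3) * w 1 * w 0 * v 1 - (1/3) * w 1 ^ 2 * v 0)
    (ψ : (Fin 4 → ℂ) → (Fin 4 → ℂ))
    (hψ : ∀ w, ψ w = ![w 3 - w 2 * w 1 - (1/3) * w 0 * w 1 ^ 2,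
      2 * w 2 + w 0 * w 1, w 1, -2 * w 0]) :
    Function.Bijective ψ ∧
    ∀ w v : Fin 4 → ℂ,
      (ω₁ w v = 0 ∧ ω₂ w v = 0) ↔
      ((fderiv ℂ ψ w v) 0 + (ψ w) 1 * (fderiv ℂ ψ w v) 2 = 0 ∧
       (fderiv ℂ ψ w v) 1 + (ψ w) 3 * (fderiv ℂ ψ w v) 2 = 0) := by
  have p (w : Fin 4 → ℂ) (i : Fin 4) : HasFDerivAt (fun w : Fin 4 → ℂ => w i)
      (ContinuousLinearMap.proj (R := ℂ) (φ := fun _ : Fin 4 => ℂ) i) w :=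
    (ContinuousLinearMap.proj (R := ℂ) (φ := fun _ : Fin 4 => ℂ) i).hasFDerivAt
  have e0 : ∀ w, ψ w 0 = w 3 - w 2 * w 1 - (1/3) * w 0 * w 1 ^ 2 := fun w => by simp [hψ]
  have e1 : ∀ w, ψ w 1 = 2 * w 2 + w 0 * w 1 := fun w => by simp [hψ]
  have e2 : ∀ w, ψ w 2 = w 1 := fun w => by simp [hψ]
  have e3 : ∀ w, ψ w 3 = -2 * w 0 := fun w => by simp [hψ]
  constructor
  · constructor
    · intro a b h
      have h0 := congrFun h 0
      have h1 := congrFun h 1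
      have h2 := congrFun h 2
      have h3 := congrFun h 3
      rw [e0, e0] at h0
      rw [e1, e1] at h1
      rw [e2, e2] at h2
      rw [e3, e3] at h3
      have k0 : a 0 = b 0 := by linear_combination (-1/2) * h3
      rw [k0, h2] at h1 h0
      have k2 : a 2 = b 2 := by linear_combination (1/2) * h1
      rw [k2] at h0
      have k3 : a 3 = b 3 := by linear_combination h0
      funext i
      fin_cases i <;> assumption
    · intro z
      refine ⟨![-z 3 / 2, z 2, (z 1 + z 3 / 2 * z 2) / 2,
        z 0 + (z 1 + z 3 / 2 * z 2) / 2 * z 2 + (1/3) * (-z 3 / 2) * z 2 ^ 2], ?_⟩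
      rw [hψ]
      funext i
      fin_cases i <;> simp <;> ring
  · intro w v
    have hd : DifferentiableAt ℂ ψ w := by
      rw [differentiableAt_pi]
      intro i
      fin_cases i
      · simp only [Fin.zero_eta, e0]; fun_prop
      · simp only [Fin.mk_one, e1]; fun_prop
      · simp only [Fin.reduceFinMk, e2]; fun_prop
      · simp only [Fin.reduceFinMk, e3]; fun_prop
    have hp := hasFDerivAt_pi'.1 hd.hasFDerivAt
    have d0 : fderiv ℂ ψ w v 0 = v 3 - (w 2 * v 1 + w 1 * v 2)
        - (1/3) * (v 0 * w 1 ^ 2 + w 0 * (2 * w 1 * v 1)) := by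
      have h := hp 0
      simp only [e0] at h
      have h' := DFunLike.congr_fun (h.unique (((p w 3).sub ((p w 2).mul (p w 1))).sub
        (((p w 0).const_mul (1/3)).mul ((p w 1).pow 2)))) v
      simp at h'
      rw [h']; ring
    have d1 : fderiv ℂ ψ w v 1 = 2 * v 2 + (w 0 * v 1 + w 1 * v 0) := by
      have h := hp 1
      simp only [e1] at h
      have h' := DFunLike.congr_fun (h.unique
        (((p w 2).const_mul 2).add ((p w 0).mul (p w 1)))) v
      simp at h'
      rw [h']
    have d2 : fderiv ℂ ψ w v 2 = v 1 := by
      have h := hp 2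
      simp only [e2] at h
      have h' := DFunLike.congr_fun (h.unique (p w 1)) v
      simpa using h'
    rw [d0, d1, d2, e1, e3, hω₁, hω₂]
    constructor
    · rintro ⟨h1, h2⟩
      exact ⟨by linear_combination h2, by linear_combination 2 * h1⟩
    · rintro ⟨h1, h2⟩
      exact ⟨by linear_combination (1/2) * h2, by linear_combination h1⟩
end

section
/- On ℂ⁴ with coordinates (x, t₂, t₁, y), let ω₁(w)(v) = v_{t₁} − (1/2)x·v_{t₂} + (1/2)t₂·v_x and ω₂(w)(v) = v_y + t₁v_{t₂} − t₂v_{t₁} + (1/3)t₂x·v_{t₂} − (1/3)t₂²·v_x, and let D_w = ker(ω₁(w)) ∩ ker(ω₂(w)). Then: (a) for all differentiable vector fields X, Y : ℂ⁴ → ℂ⁴ with X(w), Y(w) ∈ D_w for all w, one has ω₂(w)([X,Y](w)) = 0 for all w; and (b) there exist differentiable vector fields X, Y valued in D such that ω₁(w)([X,Y](w)) ≠ 0 for every w ∈ ℂ⁴. (Hence the derived system of the SO(5) twistor Pfaffian system is {ω₂}, of rank 1.) -/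
/-- A vector field composed with an affine line, differentiated coordinatewise. -/
theorem line_deriv (X : (Fin 4 → ℂ) → (Fin 4 → ℂ)) (hX : Differentiable ℂ X)
    (w u : Fin 4 → ℂ) (i : Fin 4) :
    HasDerivAt (fun z : ℂ => X (w + z • u) i) (fderiv ℂ X w u i) 0 := by
  have h1 : HasDerivAt (fun z : ℂ => w + z • u) u 0 := by
    simpa using ((hasDerivAt_id (0 : ℂ)).smul_const u).const_add w
  have h2 : HasFDerivAt X (fderiv ℂ X w) (w + (0 : ℂ) • u) := by
    simpa using (hX w).hasFDerivAt
  exact hasDerivAt_pi.1 (h2.comp_hasDerivAt (0 : ℂ) h1) i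

theorem coord_deriv (w u : Fin 4 → ℂ) (i : Fin 4) :
    HasDerivAt (fun z : ℂ => (w + z • u) i) (u i) 0 := by
  simpa using line_deriv id differentiable_id w u i

/-- The derivative of the identity `ω₂ (X) = 0` in the direction `u`. -/
theorem omega_two_deriv (X : (Fin 4 → ℂ) → (Fin 4 → ℂ)) (hX : Differentiable ℂ X)
    (h : ∀ w, X w 3 + w 2 * X w 1 - w 1 * X w 2
      + (1/3) * w 1 * w 0 * X w 1 - (1/3) * w 1 ^ 2 * X w 0 = 0) (w u : Fin 4 → ℂ) :
    fderiv ℂ X w u 3 + (u 2 * X w 1 + w 2 * fderiv ℂ X w u 1)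
      - (u 1 * X w 2 + w 1 * fderiv ℂ X w u 2)
      + (1/3) * (u 1 * w 0 * X w 1 + w 1 * u 0 * X w 1 + w 1 * w 0 * fderiv ℂ X w u 1)
      - (1/3) * (2 * w 1 * u 1 * X w 0 + w 1 ^ 2 * fderiv ℂ X w u 0) = 0 := by
  have L := line_deriv X hX w u
  have C := coord_deriv w u
  have H := ((((L 3).add ((C 2).mul (L 1))).sub ((C 1).mul (L 2))).add
    ((((C 1).const_mul (1/3)).mul (C 0)).mul (L 1))).sub
    ((((C 1).pow 2).const_mul (1/3)).mul (L 0))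
  have H0 := H.unique ((hasDerivAt_const (0 : ℂ) (0 : ℂ)).congr_of_eventuallyEq
    (Filter.Eventually.of_forall fun z => by simpa using h (w + z • u)))
  simp at H0
  linear_combination H0

/-- For the SO(5) twistor Pfaffian system `{ω₁, ω₂}` on `ℂ⁴` with
distribution `D = ker ω₁ ∩ ker ω₂`: (a) brackets of differentiable vector fields valued
in `D` are annihilated by `ω₂`; (b) some pair of differentiable vector fields valued in
`D` has bracket on which `ω₁` never vanishes. Hence the derived system is `{ω₂}`. -/
theorem stmt7 (ω₁ ω₂ : (Fin 4 → ℂ) → ((Fin 4 → ℂ) →L[ℂ] ℂ))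
    (hω₁ : ∀ w v, ω₁ w v = v 2 - (1/2) * w 0 * v 1 + (1/2) * w 1 * v 0)
    (hω₂ : ∀ w v, ω₂ w v = v 3 + w 2 * v 1 - w 1 * v 2
      + (1/3) * w 1 * w 0 * v 1 - (1/3) * w 1 ^ 2 * v 0) :
    (∀ X Y : (Fin 4 → ℂ) → (Fin 4 → ℂ), Differentiable ℂ X → Differentiable ℂ Y →
      (∀ w, ω₁ w (X w) = 0 ∧ ω₂ w (X w) = 0) →
      (∀ w, ω₁ w (Y w) = 0 ∧ ω₂ w (Y w) = 0) →
      ∀ w, ω₂ w (fderiv ℂ Y w (X w) - fderiv ℂ X w (Y w)) = 0) ∧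
    (∃ X Y : (Fin 4 → ℂ) → (Fin 4 → ℂ), Differentiable ℂ X ∧ Differentiable ℂ Y ∧
      (∀ w, ω₁ w (X w) = 0 ∧ ω₂ w (X w) = 0) ∧
      (∀ w, ω₁ w (Y w) = 0 ∧ ω₂ w (Y w) = 0) ∧
      ∀ w, ω₁ w (fderiv ℂ Y w (X w) - fderiv ℂ X w (Y w)) ≠ 0) := by
  constructor
  · intro X Y hX hY hDX hDY w
    simp only [hω₁, hω₂] at hDX hDY ⊢
    have a := omega_two_deriv X hX (fun w => (hDX w).2) w (Y w)
    have b := omega_two_deriv Y hY (fun w => (hDY w).2) w (X w)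
    have c := (hDX w).1
    have d := (hDY w).1
    simp only [Pi.sub_apply]
    linear_combination b - a + 2 * (Y w 1) * (-c) + 2 * (X w 1) * d
  · have hX : Differentiable ℂ (fun w : Fin 4 → ℂ =>
        (![1, 0, -(1/2) * w 1, -(1/6) * w 1 ^ 2] : Fin 4 → ℂ)) := by
      rw [differentiable_pi]
      intro i
      fin_cases i <;> simp <;> fun_prop
    have hY : Differentiable ℂ (fun w : Fin 4 → ℂ =>
        (![0, 1, (1/2) * w 0, - w 2 + (1/6) * w 1 * w 0] : Fin 4 → ℂ)) := by
      rw [differentiable_pi]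
      intro i
      fin_cases i <;> simp <;> fun_prop
    refine ⟨_, _, hX, hY, ?_, ?_, ?_⟩
    · intro w
      simp only [hω₁, hω₂]
      constructor <;> simp <;> ring
    · intro w
      simp only [hω₁, hω₂]
      constructor <;> simp <;> ring
    · intro w
      have LX := line_deriv _ hX w
      have LY := line_deriv _ hY w
      simp only [hω₁, Pi.sub_apply]
      generalize hu : (![1, 0, -(1/2) * w 1, -(1/6) * w 1 ^ 2] : Fin 4 → ℂ) = u
      generalize hv : (![0, 1, (1/2) * w 0, - w 2 + (1/6) * w 1 * w 0] : Fin 4 → ℂ) = v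
      have u0 : u 0 = 1 := by simp [← hu]
      have v1 : v 1 = 1 := by simp [← hv]
      have x0 := (LX v 0).unique (hasDerivAt_const (0 : ℂ) (1 : ℂ))
      have x1 := (LX v 1).unique (hasDerivAt_const (0 : ℂ) (0 : ℂ))
      have x2 := (LX v 2).unique ((coord_deriv w v 1).const_mul (-(1/2)))
      have y0 := (LY u 0).unique (hasDerivAt_const (0 : ℂ) (0 : ℂ))
      have y1 := (LY u 1).unique (hasDerivAt_const (0 : ℂ) (1 : ℂ))
      have y2 := (LY u 2).unique ((coord_deriv w u 0).const_mul (1/2))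
      rw [x0, x1, x2, y0, y1, y2, u0, v1]
      norm_num
end

section
/- On ℂ⁴ with coordinates (x, t₂, t₁, y), let ω₁(w)(v) = v_{t₁} − (1/2)x·v_{t₂} + (1/2)t₂·v_x and ω₂(w)(v) = v_y + t₁v_{t₂} − t₂v_{t₁} + (1/3)t₂x·v_{t₂} − (1/3)t₂²·v_x, and let D_w = ker(ω₁(w)) ∩ ker(ω₂(w)). If X : ℂ⁴ → ℂ⁴ is a differentiable vector field with X(w) ∈ D_w for all w such that for every differentiable vector field Y valued in D the bracket [X,Y] is also valued in D, then X = 0. (The characteristic space of this rank-2 system is zero at every point, so its class equals 4.) -/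
/-- Differentiating the relation `ω₁ (Y) = 0` in the direction `u`. -/
theorem omega_one_fderiv (Y : (Fin 4 → ℂ) → (Fin 4 → ℂ)) (hY : Differentiable ℂ Y)
    (h : ∀ w, Y w 2 - (1/2) * w 0 * Y w 1 + (1/2) * w 1 * Y w 0 = 0) (w u : Fin 4 → ℂ) :
    fderiv ℂ Y w u 2 - (1/2) * w 0 * fderiv ℂ Y w u 1 + (1/2) * w 1 * fderiv ℂ Y w u 0
      = (1/2) * (u 0 * Y w 1 - u 1 * Y w 0) := by
  have hc : ∀ i, HasFDerivAt (fun w => Y w i)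
      ((ContinuousLinearMap.proj (R := ℂ) (φ := fun _ : Fin 4 => ℂ) i).comp (fderiv ℂ Y w)) w :=
    fun i => (hasFDerivAt_pi'.1 (hY w).hasFDerivAt) i
  have hp : ∀ i, HasFDerivAt (fun w : Fin 4 → ℂ => w i)
      (ContinuousLinearMap.proj (R := ℂ) (φ := fun _ : Fin 4 => ℂ) i) w :=
    fun i => hasFDerivAt_apply i w
  have h1 := ((hc 2).sub (((hp 0).const_mul (1/2)).mul (hc 1))).add
    (((hp 1).const_mul (1/2)).mul (hc 0))
  have h2 : HasFDerivAt (fun w => Y w 2 - (1/2) * w 0 * Y w 1 + (1/2) * w 1 * Y w 0)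
      (0 : (Fin 4 → ℂ) →L[ℂ] ℂ) w := by
    simp only [h]
    exact hasFDerivAt_const 0 w
  have h3 := congrArg (fun L => L u) (h1.unique h2)
  simp at h3
  linear_combination h3

/-- For the SO(5) twistor Pfaffian system `{ω₁, ω₂}` on `ℂ⁴` with
distribution `D = ker ω₁ ∩ ker ω₂`, any differentiable vector field `X` valued in `D`
whose bracket with every differentiable vector field valued in `D` remains valued in `D`
must vanish: the characteristic space is zero at every point, so the class equals 4. -/
theorem stmt8 (ω₁ ω₂ : (Fin 4 → ℂ) → ((Fin 4 → ℂ) →L[ℂ] ℂ))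
    (hω₁ : ∀ w v, ω₁ w v = v 2 - (1/2) * w 0 * v 1 + (1/2) * w 1 * v 0)
    (hω₂ : ∀ w v, ω₂ w v = v 3 + w 2 * v 1 - w 1 * v 2
      + (1/3) * w 1 * w 0 * v 1 - (1/3) * w 1 ^ 2 * v 0)
    (X : (Fin 4 → ℂ) → (Fin 4 → ℂ)) (hXdiff : Differentiable ℂ X)
    (hXD : ∀ w, ω₁ w (X w) = 0 ∧ ω₂ w (X w) = 0)
    (hbr : ∀ Y : (Fin 4 → ℂ) → (Fin 4 → ℂ), Differentiable ℂ Y →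
      (∀ w, ω₁ w (Y w) = 0 ∧ ω₂ w (Y w) = 0) →
      ∀ w, ω₁ w (fderiv ℂ Y w (X w) - fderiv ℂ X w (Y w)) = 0 ∧
           ω₂ w (fderiv ℂ Y w (X w) - fderiv ℂ X w (Y w)) = 0) :
    X = 0 := by
  have key : ∀ Y : (Fin 4 → ℂ) → (Fin 4 → ℂ), Differentiable ℂ Y →
      (∀ w, ω₁ w (Y w) = 0 ∧ ω₂ w (Y w) = 0) →
      ∀ w, X w 0 * Y w 1 - X w 1 * Y w 0 = 0 := by
    intro Y hY hYD w
    have h := (hbr Y hY hYD w).1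
    have h1 := omega_one_fderiv Y hY (fun w => by rw [← hω₁]; exact (hYD w).1) w (X w)
    have h2 := omega_one_fderiv X hXdiff (fun w => by rw [← hω₁]; exact (hXD w).1) w (Y w)
    rw [map_sub, hω₁, hω₁] at h
    linear_combination h - h1 + h2
  have hX1 : ∀ w, X w 1 = 0 := by
    intro w
    have := key (fun w => ![1, 0, -(1/2) * w 1, -(1/6) * w 1 ^ 2]) (by
      rw [differentiable_pi]
      intro i
      fin_cases i <;> simp <;> fun_prop) (by
      intro w
      rw [hω₁, hω₂]
      constructor <;> simp <;> ring) w
    simpa using this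
  have hX0 : ∀ w, X w 0 = 0 := by
    intro w
    have := key (fun w => ![0, 1, (1/2) * w 0, -w 2 + (1/6) * w 0 * w 1]) (by
      rw [differentiable_pi]
      intro i
      fin_cases i <;> simp <;> fun_prop) (by
      intro w
      rw [hω₁, hω₂]
      constructor <;> simp <;> ring) w
    simpa using this
  have hX2 : ∀ w, X w 2 = 0 := by
    intro w
    have := (hXD w).1
    rw [hω₁, hX0, hX1] at this
    simpa using this
  have hX3 : ∀ w, X w 3 = 0 := by
    intro w
    have := (hXD w).2
    rw [hω₂, hX0, hX1, hX2] at this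
    simpa using this
  funext w i
  fin_cases i
  · exact hX0 w
  · exact hX1 w
  · exact hX2 w
  · exact hX3 w
end

section
/- On ℂ⁵ with coordinates (x₁,x₂,y₃,y₂,y₁), define ω₁(w)(v) = v_{y₃} − x₂v_{x₁} + x₁v_{x₂}, ω₂(w)(v) = v_{y₂} − (3/2)x₁v_{y₃} + (3/2)y₃v_{x₁} − x₁²v_{x₂} + x₁x₂v_{x₁}, ω₃(w)(v) = v_{y₁} + (3/2)x₂v_{y₃} − (3/2)y₃v_{x₂} + x₁x₂v_{x₂} − x₂²v_{x₁}. Let r = 3^(1/3) be the real cube root of 3 and define φ : ℂ⁵ → ℂ⁵ by φ(x₁,x₂,y₃,y₂,y₁) = (y₂ − (3/2)x₁y₃ − x₁²x₂, y₁ − (3/2)x₂y₃ − x₁x₂², −(3/r)(y₃ + x₁x₂), −r·x₁, −r·x₂). Then φ is bijective, and for every w ∈ ℂ⁵ and v ∈ ℂ⁵: (ω₁(w)(v) = ω₂(w)(v) = ω₃(w)(v) = 0) if and only if, writing z = φ(w) and u = (fderiv φ w)(v), one has u₁ + z₃u₄ = 0, u₂ + z₅u₃ + z₅²u₄ = 0,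 and u₃ + 2z₅u₄ = 0. (This identifies the superhorizontal Pfaffian system of the twistor fibration G₂/U(2) → G₂/SO(4) with Cartan's model system S¹¹₅(z₅²) = {dz₁ + z₃dz₄, dz₂ + z₅dz₃ + z₅²dz₄, dz₃ + 2z₅dz₄}.) -/
/-- On `ℂ⁵` with coordinates `(x₁,x₂,y₃,y₂,y₁)` (indices `0,1,2,3,4`),
the superhorizontal Pfaffian system `{ω₁, ω₂, ω₃}` of the twistor fibration
`G₂/U(2) → G₂/SO(4)` is identified with Cartan's model system
`S¹¹₅(z₅²) = {dz₁ + z₃dz₄, dz₂ + z₅dz₃ + z₅²dz₄, dz₃ + 2z₅dz₄}` by the bijection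
`φ(x₁,x₂,y₃,y₂,y₁) = (y₂ - (3/2)x₁y₃ - x₁²x₂, y₁ - (3/2)x₂y₃ - x₁x₂²,
-(3/r)(y₃ + x₁x₂), -r x₁, -r x₂)` with `r = 3^(1/3)`. -/
theorem stmt10 (ω₁ ω₂ ω₃ : (Fin 5 → ℂ) → ((Fin 5 → ℂ) →L[ℂ] ℂ))
    (hω₁ : ∀ w v, ω₁ w v = v 2 - w 1 * v 0 + w 0 * v 1)
    (hω₂ : ∀ w v, ω₂ w v = v 3 - (3/2) * w 0 * v 2 + (3/2) * w 2 * v 0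
      - w 0 ^ 2 * v 1 + w 0 * w 1 * v 0)
    (hω₃ : ∀ w v, ω₃ w v = v 4 + (3/2) * w 1 * v 2 - (3/2) * w 2 * v 1
      + w 0 * w 1 * v 1 - w 1 ^ 2 * v 0)
    (r : ℂ) (hr : r = ((3 : ℝ) ^ ((1 : ℝ)/3) : ℝ))
    (φ : (Fin 5 → ℂ) → (Fin 5 → ℂ))
    (hφ : ∀ w, φ w = ![w 3 - (3/2) * w 0 * w 2 - w 0 ^ 2 * w 1,
      w 4 - (3/2) * w 1 * w 2 - w 0 * w 1 ^ 2,
      -(3 / r) * (w 2 + w 0 * w 1), -r * w 0, -r * w 1]) :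
    Function.Bijective φ ∧
    ∀ w v : Fin 5 → ℂ,
      (ω₁ w v = 0 ∧ ω₂ w v = 0 ∧ ω₃ w v = 0) ↔
      ((fderiv ℂ φ w v) 0 + (φ w) 2 * (fderiv ℂ φ w v) 3 = 0 ∧
       (fderiv ℂ φ w v) 1 + (φ w) 4 * (fderiv ℂ φ w v) 2
          + (φ w) 4 ^ 2 * (fderiv ℂ φ w v) 3 = 0 ∧
       (fderiv ℂ φ w v) 2 + 2 * (φ w) 4 * (fderiv ℂ φ w v) 3 = 0) := by
  have hr3 : r ^ 3 = 3 := by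
    rw [hr, ← Complex.ofReal_pow, ← Real.rpow_natCast, ← Real.rpow_mul (by norm_num)]
    norm_num
  have hr0 : r ≠ 0 := by
    rintro rfl
    norm_num at hr3
  have h3r : 3 / r = r ^ 2 := by
    rw [div_eq_iff hr0, ← hr3]; ring
  have hi : r * r⁻¹ = 1 := mul_inv_cancel₀ hr0
  rw [h3r] at hφ
  constructor
  · constructor
    · intro w w' h
      rw [hφ, hφ] at h
      have h0 := congrFun h 0
      have h1 := congrFun h 1
      have h2 := congrFun h 2
      have h3 := congrFun h 3
      have h4 := congrFun h 4
      simp [hr0] at h0 h1 h2 h3 h4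
      rw [h3, h4] at h0 h1 h2
      have h2' : w 2 = w' 2 := by linear_combination h2
      rw [h2'] at h0 h1
      have h0' : w 3 = w' 3 := by linear_combination h0
      have h1' : w 4 = w' 4 := by linear_combination h1
      ext i
      fin_cases i <;> assumption
    · intro z
      obtain ⟨a, ha⟩ : ∃ a, -r * a = z 3 := ⟨-r⁻¹ * z 3, by linear_combination z 3 * hi⟩
      obtain ⟨b, hb⟩ : ∃ b, -r * b = z 4 := ⟨-r⁻¹ * z 4, by linear_combination z 4 * hi⟩
      obtain ⟨c, hc⟩ : ∃ c, -r ^ 2 * (c + a * b) = z 2 :=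
        ⟨-r⁻¹ ^ 2 * z 2 - a * b, by linear_combination z 2 * (r * r⁻¹ + 1) * hi⟩
      refine ⟨![a, b, c, z 0 + (3/2) * a * c + a ^ 2 * b,
        z 1 + (3/2) * b * c + a * b ^ 2], ?_⟩
      rw [hφ]
      ext i
      fin_cases i
      · simp; ring
      · simp; ring
      · simpa using hc
      · simpa using ha
      · simpa using hb
  · intro w v
    have hp : ∀ i : Fin 5, HasFDerivAt (fun w : Fin 5 → ℂ => w i)
        (ContinuousLinearMap.proj (R := ℂ) (φ := fun _ : Fin 5 => ℂ) i) w :=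
      fun i => hasFDerivAt_apply i w
    have hd : DifferentiableAt ℂ φ w := by
      rw [differentiableAt_pi]
      intro i
      simp only [hφ]
      fin_cases i <;> simp <;> fun_prop
    have hc : ∀ (i : Fin 5) (L : (Fin 5 → ℂ) →L[ℂ] ℂ),
        HasFDerivAt (fun w => φ w i) L w → fderiv ℂ φ w v i = L v := by
      intro i L hL
      rw [← (hasFDerivAt_pi'.1 hd.hasFDerivAt i).unique hL]
      rfl
    have e0 : fderiv ℂ φ w v 0 = v 3 - (3/2) * (v 0 * w 2 + w 0 * v 2)
        - (2 * w 0 * v 0 * w 1 + w 0 ^ 2 * v 1) := by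
      have := hc 0 _ (by
        simp only [hφ]
        exact (((hp 3).sub (((hp 0).const_mul (3/2)).mul (hp 2))).sub
          (((hp 0).pow 2).mul (hp 1))))
      rw [this]; simp; ring
    have e1 : fderiv ℂ φ w v 1 = v 4 - (3/2) * (v 1 * w 2 + w 1 * v 2)
        - (2 * w 1 * v 1 * w 0 + w 1 ^ 2 * v 0) := by
      have := hc 1 _ (by
        simp only [hφ]
        exact (((hp 4).sub (((hp 1).const_mul (3/2)).mul (hp 2))).sub
          ((hp 0).mul ((hp 1).pow 2))))
      rw [this]; simp; ring
    have e2 : fderiv ℂ φ w v 2 = -r ^ 2 * (v 2 + w 0 * v 1 + w 1 * v 0) := by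
      have := hc 2 _ (by
        simp only [hφ]
        exact (((hp 2).add ((hp 0).mul (hp 1))).const_mul (-r ^ 2)))
      rw [this]; simp; ring
    have e3 : fderiv ℂ φ w v 3 = -r * v 0 := by
      have := hc 3 _ (by
        simp only [hφ]
        exact ((hp 0).const_mul (-r)))
      rw [this]; simp
    have p2 : φ w 2 = -r ^ 2 * (w 2 + w 0 * w 1) := by rw [hφ]; rfl
    have p4 : φ w 4 = -r * w 1 := by rw [hφ]; rfl
    have q1 : fderiv ℂ φ w v 0 + φ w 2 * fderiv ℂ φ w v 3 = ω₂ w v := by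
      rw [e0, e3, p2, hω₂]
      linear_combination (w 2 + w 0 * w 1) * v 0 * hr3
    have q2 : fderiv ℂ φ w v 1 + φ w 4 * fderiv ℂ φ w v 2
          + φ w 4 ^ 2 * fderiv ℂ φ w v 3 = ω₃ w v := by
      rw [e1, e2, e3, p4, hω₃]
      linear_combination (w 1 * (v 2 + w 0 * v 1 + w 1 * v 0) - w 1 ^ 2 * v 0) * hr3
    have q3 : fderiv ℂ φ w v 2 + 2 * φ w 4 * fderiv ℂ φ w v 3 = -r ^ 2 * ω₁ w v := by
      rw [e2, e3, p4, hω₁]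
      ring
    rw [q1, q2, q3]
    have : -r ^ 2 * ω₁ w v = 0 ↔ ω₁ w v = 0 := by simp [hr0]
    rw [this]
    tauto
end

section
/- Let ω be the 1-form on ℂ³ given by ω(w)(v) = v₃ + w₂v₁ − w₁v₂. Then: (a) for every w ∈ ℂ³, ker(ω(w)) is exactly the linear span of the vectors (1,0,−w₂) and (0,1,w₁); and (b) the map φ : ℂ³ → ℂ³, φ(w₁,w₂,w₃) = (w₃ − w₁w₂, 2w₂, w₁), is bijective and for every w, v ∈ ℂ³ one has ω(w)(v) = 0 if and only if u₁ + z₂u₃ = 0, where z = φ(w) and u = (fderiv φ w)(v). (This identifies the superhorizontal Pfaffian system of the twistor fibration Sp(2)/Sp(1)×U(1) ≅ ℂP³ → Sp(2)/Sp(1)×Sp(1) ≅ S⁴, whose superhorizontal distribution is spanned by ∂₁ − w₂∂₃ and ∂₂ + w₁∂₃, with the model system S²₃ = {dz₁ + z₂dz₃}.) -/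
/-- For `ω(w)(v) = v₃ + w₂v₁ - w₁v₂` on `ℂ³`: (a) `ker (ω w)` is spanned
by `(1,0,-w₂)` and `(0,1,w₁)`; (b) `φ(w₁,w₂,w₃) = (w₃ - w₁w₂, 2w₂, w₁)` is bijective and
identifies `{ω}` (the superhorizontal system of `ℂP³ → S⁴`) with the model system
`S²₃ = {dz₁ + z₂dz₃}`. -/
theorem stmt14 (ω : (Fin 3 → ℂ) → ((Fin 3 → ℂ) →L[ℂ] ℂ))
    (hω : ∀ w v, ω w v = v 2 + w 1 * v 0 - w 0 * v 1)
    (φ : (Fin 3 → ℂ) → (Fin 3 → ℂ))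
    (hφ : ∀ w, φ w = ![w 2 - w 0 * w 1, 2 * w 1, w 0]) :
    (∀ w v : Fin 3 → ℂ, ω w v = 0 ↔
      v ∈ Submodule.span ℂ ({![1, 0, -w 1], ![0, 1, w 0]} : Set (Fin 3 → ℂ))) ∧
    Function.Bijective φ ∧
    ∀ w v : Fin 3 → ℂ, ω w v = 0 ↔
      (fderiv ℂ φ w v) 0 + (φ w) 1 * (fderiv ℂ φ w v) 2 = 0 := by
  have hcoord : ∀ i : Fin 3, ∀ w : Fin 3 → ℂ, HasFDerivAt (fun x : Fin 3 → ℂ => x i)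
      (ContinuousLinearMap.proj (R := ℂ) (φ := fun _ : Fin 3 => ℂ) i) w :=
    fun i w => hasFDerivAt_apply i w
  refine ⟨fun w v => ?_, ⟨fun a b hab => ?_, fun z => ?_⟩, fun w v => ?_⟩
  · rw [hω, Submodule.mem_span_pair]
    constructor
    · intro h
      refine ⟨v 0, v 1, ?_⟩
      ext i
      fin_cases i
      · simp
      · simp
      · simp
        linear_combination -h
    · rintro ⟨a, b, rfl⟩
      simp
      ring
  · rw [hφ, hφ] at hab
    have h0 := congrFun hab 0
    have h1 := congrFun hab 1
    have h2 := congrFun hab 2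
    simp at h0 h1 h2
    rw [h1, h2] at h0
    ext i
    fin_cases i
    · exact h2
    · exact h1
    · simpa using h0
  · refine ⟨![z 2, z 1 / 2, z 0 + z 2 * (z 1 / 2)], ?_⟩
    rw [hφ]
    ext i
    fin_cases i
    · simp
    · simp
      ring
    · simp
  · have hd : DifferentiableAt ℂ φ w := by
      have : φ = fun w => ![w 2 - w 0 * w 1, 2 * w 1, w 0] := funext hφ
      rw [this, differentiableAt_pi]
      intro i
      fin_cases i
      · exact (((hcoord 2 w).sub ((hcoord 0 w).mul (hcoord 1 w)))).differentiableAt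
      · exact ((hcoord 1 w).const_mul 2).differentiableAt
      · exact (hcoord 0 w).differentiableAt
    have hp := hasFDerivAt_pi'.1 hd.hasFDerivAt
    have e0 : (fun x => φ x 0) = fun x => x 2 - x 0 * x 1 := by
      funext x; rw [hφ]; rfl
    have e2 : (fun x => φ x 2) = fun x => x 0 := by
      funext x; rw [hφ]; rfl
    have p0 := hp 0
    have p2 := hp 2
    rw [e0] at p0
    rw [e2] at p2
    have q0 := congrArg (fun L => L v)
      (p0.unique ((hcoord 2 w).sub ((hcoord 0 w).mul (hcoord 1 w))))
    have q2 := congrArg (fun L => L v) (p2.unique (hcoord 0 w))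
    simp at q0 q2
    rw [q0, q2, hω, hφ]
    simp
    constructor
    · intro h
      linear_combination h
    · intro h
      linear_combination h
end

section
/- Let ω be the 1-form on ℂ⁵ given by ω(w)(v) = v₅ − (1/2)(w₁v₄ − w₄v₁) − (1/2)(w₃v₂ − w₂v₃), and let η be the contact 1-form on ℂ⁵ given by η(z)(u) = u₁ + z₂u₃ + z₄u₅. Define φ : ℂ⁵ → ℂ⁵ by φ(w₁,w₂,w₃,w₄,w₅) = (w₅ − (1/2)w₁w₄ − (1/2)w₂w₃, w₄, w₁, w₂, w₃). Then φ is bijective, and for every w ∈ ℂ⁵ and v ∈ ℂ⁵ one has ω(w)(v) = 0 if and only if η(φ(w))((fderiv φ w)(v)) = 0. (This identifies the superhorizontal Pfaffian system of the SU(4) twistor fibration with g₁ = g_α ⊕ g_γ ⊕ g_{α+β} ⊕ g_{β+γ}, g₂ = g_{α+β+γ} with the model system S³₅ = {dz₁ + z₂dz₃ + z₄dz₅}.) -/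
/-- On `ℂ⁵`, the 1-form
`ω(w)(v) = v₅ - (1/2)(w₁v₄ - w₄v₁) - (1/2)(w₃v₂ - w₂v₃)` (the superhorizontal system of
the SU(4) twistor fibration) is identified with the contact model system
`S³₅ = {dz₁ + z₂dz₃ + z₄dz₅}` by
`φ(w₁,…,w₅) = (w₅ - (1/2)w₁w₄ - (1/2)w₂w₃, w₄, w₁, w₂, w₃)`. -/
theorem stmt16 (ω η : (Fin 5 → ℂ) → ((Fin 5 → ℂ) →L[ℂ] ℂ))
    (hω : ∀ w v, ω w v = v 4 - (1/2) * (w 0 * v 3 - w 3 * v 0)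
      - (1/2) * (w 2 * v 1 - w 1 * v 2))
    (hη : ∀ z u, η z u = u 0 + z 1 * u 2 + z 3 * u 4)
    (φ : (Fin 5 → ℂ) → (Fin 5 → ℂ))
    (hφ : ∀ w, φ w = ![w 4 - (1/2) * w 0 * w 3 - (1/2) * w 1 * w 2, w 3, w 0, w 1, w 2]) :
    Function.Bijective φ ∧
    ∀ w v : Fin 5 → ℂ, ω w v = 0 ↔ η (φ w) (fderiv ℂ φ w v) = 0 := by
  have hcomp : ∀ (w : Fin 5 → ℂ) (i : Fin 5),
      HasFDerivAt (fun x : Fin 5 → ℂ => x i)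
        (ContinuousLinearMap.proj (R := ℂ) (φ := fun _ : Fin 5 => ℂ) i) w :=
    fun w i => (ContinuousLinearMap.proj (R := ℂ) (φ := fun _ : Fin 5 => ℂ) i).hasFDerivAt
  have hdiff : Differentiable ℂ φ := by
    rw [funext hφ]
    refine differentiable_pi.2 fun i => ?_
    fin_cases i <;> simp <;> fun_prop
  have key : ∀ (w : Fin 5 → ℂ) (i : Fin 5) (L : (Fin 5 → ℂ) →L[ℂ] ℂ),
      HasFDerivAt (fun x => φ x i) L w → ∀ v, fderiv ℂ φ w v i = L v := by
    intro w i L hL v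
    have h := (hasFDerivAt_pi'.1 (hdiff w).hasFDerivAt) i
    rw [← h.unique hL]
    rfl
  refine ⟨⟨?_, ?_⟩, ?_⟩
  · intro a b h
    rw [hφ, hφ] at h
    have h0 := congrFun h 0
    have h1 : a 3 = b 3 := congrFun h 1
    have h2 : a 0 = b 0 := congrFun h 2
    have h3 : a 1 = b 1 := congrFun h 3
    have h4 : a 2 = b 2 := congrFun h 4
    have h5 : a 4 = b 4 := by
      simp only [Matrix.cons_val_zero, h1, h2, h3, h4] at h0
      linear_combination h0
    funext i
    fin_cases i <;> assumption
  · intro z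
    refine ⟨![z 2, z 3, z 4, z 1, z 0 + (1/2) * z 2 * z 1 + (1/2) * z 3 * z 4], ?_⟩
    rw [hφ]
    funext i
    fin_cases i <;> simp
    ring
  · intro w v
    have e0 := key w 0 _ (by
      simp only [hφ, Matrix.cons_val_zero]
      exact ((hcomp w 4).sub (((hcomp w 0).const_mul (1/2)).mul (hcomp w 3))).sub
        (((hcomp w 1).const_mul (1/2)).mul (hcomp w 2))) v
    have e2 := key w 2 _ (by simpa [hφ] using hcomp w 0) v
    have e4 := key w 4 _ (by simpa [hφ] using hcomp w 2) v
    have p1 : φ w 1 = w 3 := by rw [hφ]; rfl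
    have p3 : φ w 3 = w 1 := by rw [hφ]; rfl
    rw [hη, e0, e2, e4, p1, p3, hω]
    simp only [ContinuousLinearMap.sub_apply, ContinuousLinearMap.add_apply,
      ContinuousLinearMap.smul_apply, ContinuousLinearMap.proj_apply, smul_eq_mul]
    apply Eq.congr_left
    ring
end
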